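/- arXiv:2209.10140 — 2 statements merged into one kernel-verified Lean document; each statement's English description precedes it below -/
import Mathlib

section
/- For every α with 0 < α < 1, one has (β²+1)^{1−α/2} F(α,β) → ∞ as β → ∞. -/
open MeasureTheory Real Filter

/-- `F α β = β/(β²+1) − (α/(β²+1)^{1−α/2}) ∫_{−arctan β}^{π/2} cos^α θ dθ`. -/
noncomputable def F (α β : ℝ) : ℝ :=
  β / (β ^ 2 + 1) -
    α / (β ^ 2 + 1) ^ (1 - α / 2) * ∫ θ in (-Real.arctan β)..(Real.pi / 2), Real.cos θ ^ α

/-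
Multiplying `F α b` by `(b² + 1) ^ (1 - α / 2)` leaves `b / (b² + 1) ^ (α / 2)`, which grows like
`b ^ (1 - α)`, minus `α` times an integral of `cos ^ α`. Since `cos ^ α` is integrable up to the
endpoints `±π / 2` for `-1 < α`, that integral has a finite limit.
-/

open Set Topology

theorem sinc_pos_of_abs_lt_pi {x : ℝ} (hx : |x| < π) : 0 < sinc x := by
  wlog h : 0 ≤ x generalizing x
  · rw [← sinc_neg]
    exact this (by rwa [abs_neg]) (by linarith)
  obtain rfl | h_pos := h.eq_or_lt
  · simp
  · rw [sinc_of_ne_zero h_pos.ne']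
    exact div_pos (sin_pos_of_pos_of_lt_pi h_pos (lt_of_abs_lt hx)) h_pos

-- The singularity at `0` is isolated by the factorization `sin x = sinc x * x`.
theorem intervalIntegrable_sin_rpow {r c : ℝ} (hr : -1 < r) (hc₀ : 0 ≤ c) (hc : c < π) :
    IntervalIntegrable (fun x ↦ sin x ^ r) volume 0 c := by
  have sinc_pos : ∀ x ∈ uIcc 0 c, 0 < sinc x := fun x hx ↦ by
    rw [uIcc_of_le hc₀] at hx
    exact sinc_pos_of_abs_lt_pi (by rw [abs_of_nonneg hx.1]; exact hx.2.trans_lt hc)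
  have sinc_rpow_continuousOn : ContinuousOn (fun x ↦ sinc x ^ r) (uIcc 0 c) :=
    continuous_sinc.continuousOn.rpow_const fun x hx ↦ .inl (sinc_pos x hx).ne'
  refine ((intervalIntegral.intervalIntegrable_rpow' hr).continuousOn_mul
    sinc_rpow_continuousOn).congr_uIoo fun x hx ↦ ?_
  have hx₀ : 0 < x := by
    rw [uIoo_of_le hc₀] at hx
    exact hx.1
  calc sinc x ^ r * x ^ r
      = (sinc x * x) ^ r := (mul_rpow (sinc_pos x (Ioo_subset_Icc_self hx)).le hx₀.le).symm
    _ = sin x ^ r := by rw [sinc_of_ne_zero hx₀.ne', div_mul_cancel₀ _ hx₀.ne']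

theorem intervalIntegrable_cos_rpow {r : ℝ} (hr : -1 < r) :
    IntervalIntegrable (fun x ↦ cos x ^ r) volume (-(π / 2)) (π / 2) := by
  have right_half : IntervalIntegrable (fun x ↦ cos x ^ r) volume 0 (π / 2) := by
    have h := (intervalIntegrable_sin_rpow hr pi_div_two_pos.le
      (half_lt_self pi_pos)).comp_sub_left (π / 2)
    simpa only [sin_pi_div_two_sub, sub_zero, sub_self] using h.symm
  have left_half : IntervalIntegrable (fun x ↦ cos x ^ r) volume (-(π / 2)) 0 := by
    have h := right_half.comp_sub_left 0
    simpa only [zero_sub, cos_neg, neg_zero] using h.symm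
  exact left_half.trans right_half

theorem tendsto_integral_cos_rpow_neg_arctan {r : ℝ} (hr : -1 < r) :
    Tendsto (fun b ↦ ∫ θ in (-arctan b)..(π / 2), cos θ ^ r) atTop
      (𝓝 (∫ θ in (-(π / 2))..(π / 2), cos θ ^ r)) := by
  have primitive_continuousOn :
      ContinuousOn (fun a ↦ ∫ θ in a..(π / 2), cos θ ^ r) (uIcc (-(π / 2)) (π / 2)) :=
    intervalIntegral.continuousOn_primitive_interval_left
      ((intervalIntegrable_iff' enorm_ne_top).mp (intervalIntegrable_cos_rpow hr))
  refine (primitive_continuousOn _ left_mem_uIcc).tendsto.comp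
    (tendsto_nhdsWithin_iff.mpr ⟨?_, .of_forall fun b ↦ ?_⟩)
  · exact (tendsto_nhds_of_tendsto_nhdsWithin tendsto_arctan_atTop).neg
  · rw [uIcc_of_le (by linarith [pi_pos])]
    constructor <;> linarith [arctan_lt_pi_div_two b, neg_pi_div_two_lt_arctan b]

theorem div_sq_add_one_rpow_eq {b : ℝ} (hb : 0 < b) (s : ℝ) :
    b / (b ^ 2 + 1) ^ s = b ^ (1 - 2 * s) * (1 + (b ^ 2)⁻¹) ^ (-s) := by
  have factor_sq : b ^ 2 + 1 = b ^ 2 * (1 + (b ^ 2)⁻¹) := by field_simp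
  rw [factor_sq, mul_rpow (by positivity) (by positivity), ← rpow_natCast_mul hb.le,
    rpow_sub hb, rpow_one, rpow_neg (by positivity), Nat.cast_ofNat, ← div_eq_mul_inv, div_div]

theorem tendsto_div_sq_add_one_rpow_atTop {s : ℝ} (hs : s < 1 / 2) :
    Tendsto (fun b : ℝ ↦ b / (b ^ 2 + 1) ^ s) atTop atTop := by
  have correction_tendsto_one :
      Tendsto (fun b : ℝ ↦ (1 + (b ^ 2)⁻¹) ^ (-s)) atTop (𝓝 1) := by
    have h : Tendsto (fun b : ℝ ↦ 1 + (b ^ 2)⁻¹) atTop (𝓝 1) := by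
      simpa using (tendsto_pow_atTop two_ne_zero).inv_tendsto_atTop.const_add (1 : ℝ)
    simpa using h.rpow_const (p := -s) (.inl one_ne_zero)
  refine ((tendsto_rpow_atTop (by linarith : 0 < 1 - 2 * s)).atTop_mul_pos one_pos
    correction_tendsto_one).congr' ?_
  filter_upwards [eventually_gt_atTop 0] with b hb
  exact (div_sq_add_one_rpow_eq hb s).symm

theorem sq_add_one_rpow_mul_F (α b : ℝ) :
    (b ^ 2 + 1) ^ (1 - α / 2) * F α b =
      b / (b ^ 2 + 1) ^ (α / 2) - α * ∫ θ in (-arctan b)..(π / 2), cos θ ^ α := by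
  have base_pos : 0 < b ^ 2 + 1 := by positivity
  have power_ne_zero : (b ^ 2 + 1) ^ (α / 2) ≠ 0 := (rpow_pos_of_pos base_pos _).ne'
  rw [F, rpow_sub base_pos, rpow_one]
  field_simp

theorem stmt3_general {α : ℝ} (hα : -1 < α) (hα1 : α < 1) :
    Tendsto (fun b : ℝ ↦ (b ^ 2 + 1) ^ (1 - α / 2) * F α b) atTop atTop := by
  simp only [sq_add_one_rpow_mul_F]
  simpa only [sub_eq_add_neg] using
    (tendsto_div_sq_add_one_rpow_atTop (by linarith : α / 2 < 1 / 2)).atTop_add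
      ((tendsto_integral_cos_rpow_neg_arctan hα).const_mul α).neg

theorem stmt3 (α : ℝ) (hα0 : 0 < α) (hα1 : α < 1) :
    Filter.Tendsto (fun b : ℝ => (b ^ 2 + 1) ^ (1 - α / 2) * F α b)
      Filter.atTop Filter.atTop :=
  stmt3_general (by linarith) hα1
end

section
/- For every α with 0 < α < 1, there exists a unique β*(α) ∈ (0,∞) such that F(α,β*(α)) = 0; moreover F(α,β) < 0 for all 0 ≤ β < β*(α) and F(α,β) > 0 for all β > β*(α). -/
open MeasureTheory Real

/-!
Multiplying `F α β` by the positive factor `(β² + 1)^{1 - α/2}` gives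
`β (β² + 1)^{-α/2} - α ∫ cos^α`, in which `β` enters the integral only through the lower limit
`-arctan β`. Since `cos (arctan β) = (β² + 1)^{-1/2}`, the derivative of this product collapses to
`(1 - α) (β² + 1)^{-α/2}`, which is at least `(1 - α) (β² + 1)^{-1/2}`, the derivative of
`(1 - α) arsinh β`. Hence the product is strictly increasing and grows at least like
`(1 - α) arsinh β`, while it is negative at `β = 0`, so it has exactly one zero, and that zero is
positive.
-/

lemma cos_arctan_rpow (α x : ℝ) : cos (arctan x) ^ α = (x ^ 2 + 1) ^ (-(α / 2)) := by
  have hpos : 0 ≤ x ^ 2 + 1 := by positivity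
  rw [cos_arctan, add_comm, sqrt_eq_rpow, one_div, ← rpow_neg hpos, ← rpow_mul hpos]
  ring_nf

lemma continuous_cos_rpow {α : ℝ} (hα : 0 ≤ α) : Continuous fun θ : ℝ => cos θ ^ α :=
  continuous_cos.rpow_const fun _ => Or.inr hα

lemma integral_cos_rpow_pos {α : ℝ} (hα : 0 ≤ α) : 0 < ∫ θ in (0 : ℝ)..(π / 2), cos θ ^ α := by
  refine intervalIntegral.intervalIntegral_pos_of_pos_on
    ((continuous_cos_rpow hα).intervalIntegrable _ _) (fun θ hθ => ?_) pi_div_two_pos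
  exact rpow_pos_of_pos (cos_pos_of_mem_Ioo ⟨by linarith [hθ.1, pi_pos], hθ.2⟩) α

lemma hasDerivAt_integral_neg_arctan_cos_rpow {α : ℝ} (hα : 0 ≤ α) (c β : ℝ) :
    HasDerivAt (fun b => ∫ θ in (-arctan b)..c, cos θ ^ α)
      ((β ^ 2 + 1) ^ (-(α / 2)) / (β ^ 2 + 1)) β := by
  have hcont := continuous_cos_rpow hα
  have hlower : HasDerivAt (fun u => ∫ θ in u..c, cos θ ^ α)
      (-(cos (-arctan β) ^ α)) (-arctan β) :=
    intervalIntegral.integral_hasDerivAt_left (hcont.intervalIntegrable _ _)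
      (hcont.stronglyMeasurableAtFilter _ _) hcont.continuousAt
  refine (hlower.comp β (hasDerivAt_arctan β).neg).congr_deriv ?_
  rw [cos_neg, cos_arctan_rpow, add_comm 1 (β ^ 2)]
  ring

lemma hasDerivAt_mul_sq_add_one_rpow (p x : ℝ) :
    HasDerivAt (fun y : ℝ => y * (y ^ 2 + 1) ^ p)
      ((x ^ 2 + 1) ^ p + 2 * p * x ^ 2 * ((x ^ 2 + 1) ^ p / (x ^ 2 + 1))) x := by
  have hpos : x ^ 2 + 1 ≠ 0 := by positivity
  have hsq : HasDerivAt (fun y : ℝ => y ^ 2 + 1) (2 * x) x := by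
    simpa using (hasDerivAt_pow 2 x).add_const 1
  refine ((hasDerivAt_id x).mul (hsq.rpow_const (p := p) (Or.inl hpos))).congr_deriv ?_
  rw [rpow_sub_one hpos, id]
  ring

lemma inv_sqrt_one_add_sq_le_rpow {α : ℝ} (hα : α ≤ 1) (x : ℝ) :
    (√(1 + x ^ 2))⁻¹ ≤ (x ^ 2 + 1) ^ (-(α / 2)) := by
  rw [add_comm, sqrt_eq_rpow, ← rpow_neg (by positivity)]
  exact rpow_le_rpow_of_exponent_le (by linarith [sq_nonneg x]) (by linarith)

/-- The function `F α β` multiplied by `(β² + 1)^{1 - α/2}`: it has the same sign as `F α β` and,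
unlike it, is monotone in `β` when `0 ≤ α ≤ 1`. -/
noncomputable def scaledF (α β : ℝ) : ℝ :=
  β * (β ^ 2 + 1) ^ (-(α / 2)) - α * ∫ θ in (-arctan β)..(π / 2), cos θ ^ α

lemma F_eq_rpow_mul_scaledF (α β : ℝ) : F α β = (β ^ 2 + 1) ^ (α / 2 - 1) * scaledF α β := by
  have hpos : 0 < β ^ 2 + 1 := by positivity
  have hmul : (β ^ 2 + 1) ^ (α / 2 - 1) * (β ^ 2 + 1) ^ (-(α / 2)) = (β ^ 2 + 1)⁻¹ := by
    rw [← rpow_add hpos, ← rpow_neg_one]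
    ring_nf
  have hinv : ((β ^ 2 + 1) ^ (1 - α / 2))⁻¹ = (β ^ 2 + 1) ^ (α / 2 - 1) := by
    rw [← rpow_neg hpos.le, neg_sub]
  rw [F, scaledF, div_eq_mul_inv, div_eq_mul_inv α, hinv, ← hmul]
  ring

lemma sign_F (α β : ℝ) : SignType.sign (F α β) = SignType.sign (scaledF α β) := by
  have hpos : 0 < (β ^ 2 + 1) ^ (α / 2 - 1) := by positivity
  rw [F_eq_rpow_mul_scaledF, sign_mul, sign_pos hpos, one_mul]

lemma scaledF_zero_neg {α : ℝ} (hα : 0 < α) : scaledF α 0 < 0 := by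
  simpa [scaledF] using mul_pos hα (integral_cos_rpow_pos hα.le)

lemma hasDerivAt_scaledF {α : ℝ} (hα : 0 ≤ α) (β : ℝ) :
    HasDerivAt (scaledF α) ((1 - α) * (β ^ 2 + 1) ^ (-(α / 2))) β := by
  refine ((hasDerivAt_mul_sq_add_one_rpow (-(α / 2)) β).sub
    ((hasDerivAt_integral_neg_arctan_cos_rpow hα (π / 2) β).const_mul α)).congr_deriv ?_
  field_simp
  ring

lemma continuous_scaledF {α : ℝ} (hα : 0 ≤ α) : Continuous (scaledF α) :=
  continuous_iff_continuousAt.2 fun β => (hasDerivAt_scaledF hα β).continuousAt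

lemma monotone_scaledF_sub_arsinh {α : ℝ} (hα0 : 0 ≤ α) (hα1 : α ≤ 1) :
    Monotone fun β => scaledF α β - (1 - α) * arsinh β := by
  refine monotone_of_hasDerivAt_nonneg
    (fun β => (hasDerivAt_scaledF hα0 β).sub ((hasDerivAt_arsinh β).const_mul (1 - α)))
    fun β => sub_nonneg.2 ?_
  exact mul_le_mul_of_nonneg_left (inv_sqrt_one_add_sq_le_rpow hα1 β) (sub_nonneg.2 hα1)

lemma strictMono_scaledF {α : ℝ} (hα0 : 0 ≤ α) (hα1 : α < 1) : StrictMono (scaledF α) := by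
  have harsinh : StrictMono fun β => (1 - α) * arsinh β :=
    arsinh_strictMono.const_mul (sub_pos.2 hα1)
  simpa using (monotone_scaledF_sub_arsinh hα0 hα1.le).add_strictMono harsinh

lemma exists_pos_scaledF_eq_zero {α : ℝ} (hα0 : 0 < α) (hα1 : α < 1) :
    ∃ β, 0 < β ∧ scaledF α β = 0 := by
  have hzero : scaledF α 0 < 0 := scaledF_zero_neg hα0
  have hα : 0 < 1 - α := sub_pos.2 hα1
  -- Chosen so that the lower bound `scaledF α 0 + (1 - α) * arsinh b` vanishes.
  let b := sinh (-scaledF α 0 / (1 - α))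
  have hb : 0 ≤ b := sinh_nonneg_iff.2 (div_nonneg (neg_nonneg.2 hzero.le) hα.le)
  have hscaled : 0 ≤ scaledF α b := by
    have hle : scaledF α 0 ≤ scaledF α b - (1 - α) * arsinh b := by
      simpa using monotone_scaledF_sub_arsinh hα0.le hα1.le hb
    rw [arsinh_sinh, mul_div_cancel₀ _ hα.ne'] at hle
    linarith
  obtain ⟨β, -, hroot⟩ :=
    intermediate_value_Icc hb (continuous_scaledF hα0.le).continuousOn ⟨hzero.le, hscaled⟩
  exact ⟨β, (strictMono_scaledF hα0.le hα1).lt_iff_lt.1 (hroot ▸ hzero), hroot⟩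

theorem stmt4_general (α : ℝ) (hα0 : 0 < α) (hα1 : α < 1) :
    ∃ βs : ℝ, 0 < βs ∧ (∀ β, F α β = 0 ↔ β = βs) ∧ (∀ β, F α β < 0 ↔ β < βs) ∧
      (∀ β, 0 < F α β ↔ βs < β) := by
  have hmono : StrictMono (scaledF α) := strictMono_scaledF hα0.le hα1
  obtain ⟨βs, hpos, hroot⟩ := exists_pos_scaledF_eq_zero hα0 hα1
  refine ⟨βs, hpos, fun β => ?_, fun β => ?_, fun β => ?_⟩
  · rw [← _root_.sign_eq_zero_iff, sign_F, _root_.sign_eq_zero_iff, ← hroot, hmono.injective.eq_iff]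
  · rw [← sign_eq_neg_one_iff, sign_F, sign_eq_neg_one_iff, ← hroot, hmono.lt_iff_lt]
  · rw [← sign_eq_one_iff, sign_F, sign_eq_one_iff, ← hroot, hmono.lt_iff_lt]

theorem stmt4 (α : ℝ) (hα0 : 0 < α) (hα1 : α < 1) :
    ∃ βs : ℝ, 0 < βs ∧ F α βs = 0 ∧
      (∀ β' : ℝ, 0 < β' → F α β' = 0 → β' = βs) ∧
      (∀ β : ℝ, 0 ≤ β → β < βs → F α β < 0) ∧
      (∀ β : ℝ, βs < β → 0 < F α β) := by
  obtain ⟨βs, hpos, hzero, hneg, hgt⟩ := stmt4_general α hα0 hα1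
  exact ⟨βs, hpos, (hzero βs).2 rfl, fun β _ => (hzero β).1, fun β _ => (hneg β).2,
    fun β => (hgt β).2⟩
end
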